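/- For every integer k ≥ 0, the number p(k) of order ideals of the poset P_{k+1,k+2} equals the Catalan number C_{k+1} = (1/(k+2))·binom(2k+2, k+1); moreover, setting p(−1) = 1 and p(0) = 1, the numbers p(k) satisfy the recurrence p(k) = Σ_{i=1}^{k+1} p(i−2)·p(k−i) for all k ≥ 1. -/

import Mathlib

/-!
Write `n = k + 1`. The number `q * n + r` with `r < n` lies in `ℕn + ℕ(n + 1)` exactly when `r ≤ q`,
so the poset consists of the pairs `(q, r)` with `q < r < n`, and a step down goes from `(q + 1, r)`
to `(q, r)` (subtract `n`) or from `(q + 1, r + 1)` to `(q, r)` (subtract `n + 1`). An order ideal is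
therefore determined by its column heights `h r = #{q | q * n + r ∈ I}`, and the height sequences
that occur are exactly those with `h 0 = 0` and `h (r + 1) ≤ h r + 1`: the bound `h r ≤ r` that keeps
`I` inside the poset follows by induction (`IsHeightList.getD_le`). This gives the bijection
`bijOn_idealOf`.

Such sequences are counted by Catalan numbers: cutting at the second zero, every nonempty one is
uniquely `0 :: (A + 1) ++ B` with `A`, `B` again of this kind. This is the recursive structure of
binary trees, with length corresponding to the number of nodes (`bijOn_treeList`), and Mathlib
counts these trees. The recurrence is the one of the Catalan numbers, with `p (m) = C_{m + 1}`
for all `m ≥ -1`.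
-/


/-- The underlying set of the poset `P_{s,t}`: nonnegative integers not of the form
`α·s + β·t` with `α, β` nonnegative integers. -/
def PosetElems (s t : ℕ) : Set ℕ := {m | ¬ ∃ a b : ℕ, m = a * s + b * t}

/-- The order relation of `P_{s,t}`: `c ≤_P d` iff `d − c = α·s + β·t` for some
nonnegative integers `α, β`. -/
def PosetLe (s t c d : ℕ) : Prop := ∃ a b : ℕ, d = c + a * s + b * t

/-- An order ideal of the poset `P_{s,t}`: a subset `I` of the underlying set such that
`c ∈ I` whenever `c ≤_P d` for some `d ∈ I`. -/
def IsOrderIdeal (s t : ℕ) (I : Set ℕ) : Prop :=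
  I ⊆ PosetElems s t ∧
    ∀ ⦃c d : ℕ⦄, c ∈ PosetElems s t → d ∈ I → PosetLe s t c d → c ∈ I

/-- The number of order ideals of the poset `P_{k+1, k+2}`. -/
noncomputable def numIdeals (k : ℕ) : ℕ :=
  {I : Set ℕ | IsOrderIdeal (k + 1) (k + 2) I}.ncard

/-- `p(k)` extended to integer arguments by the convention `p(−1) = 1`
(and value `1` below `−1`, which is never used). -/
noncomputable def pe : ℤ → ℕ := fun m => if 0 ≤ m then numIdeals m.toNat else 1

/-- A list of natural numbers that starts with `0` (if nonempty) and goes up by at most one at each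
step. These are the possible lists of column heights of an order ideal. -/
def IsHeightList (l : List ℕ) : Prop :=
  l.IsChain (fun a b => b ≤ a + 1) ∧ ∀ x ∈ l.head?, x = 0

/-- The height list of a binary tree: a node with subtrees `a`, `b` gives `0`, followed by the list
of `a` shifted up by one, followed by the list of `b`. -/
def treeList : BinaryTree Unit → List ℕ
  | .nil => []
  | .node _ a b => 0 :: ((treeList a).map (· + 1) ++ treeList b)

/-- The set of natural numbers `q * n + r`, `r < n`, with `q` less than the `r`-th entry of `l`. -/
def idealOf (n : ℕ) (l : List ℕ) : Set ℕ := {m | m / n < l.getD (m % n) 0}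

/-! ### Height lists and binary trees -/

lemma length_treeList (t : BinaryTree Unit) : (treeList t).length = t.numNodes := by
  induction t with
  | nil => rfl
  | node v a b iha ihb => simp [treeList, BinaryTree.numNodes, iha, ihb]

lemma isHeightList_node {A B : List ℕ} (hA : IsHeightList A) (hB : IsHeightList B) :
    IsHeightList (0 :: (A.map (· + 1) ++ B)) := by
  obtain ⟨hA1, hA2⟩ := hA
  obtain ⟨hB1, hB2⟩ := hB
  refine ⟨?_, by simp⟩
  rw [List.isChain_cons, List.isChain_append, List.isChain_map]
  refine ⟨?_, hA1.imp (by intro a b h; omega), hB1, ?_⟩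
  · intro y hy
    cases A with
    | nil => have := hB2 y (by simpa using hy); omega
    | cons a A =>
      have := hA2 a (by simp)
      simp at hy
      omega
  · intro x _ y hy
    have := hB2 y hy
    omega

lemma isHeightList_treeList (t : BinaryTree Unit) : IsHeightList (treeList t) := by
  induction t with
  | nil => exact ⟨List.isChain_nil, by simp [treeList]⟩
  | node v a b iha ihb => exact isHeightList_node iha ihb

/-- The decomposition `A.map (· + 1) ++ B` can be read off, as `B` begins at the first zero. -/
lemma takeWhile_node {A B : List ℕ} (hB : IsHeightList B) :
    (A.map (· + 1) ++ B).takeWhile (fun x => decide (0 < x)) = A.map (· + 1) := by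
  rw [List.takeWhile_append_of_pos (by simp)]
  cases B with
  | nil => simp
  | cons b B => simp [hB.2 b (by simp)]

lemma treeList_injective : Function.Injective treeList := by
  intro s
  induction s with
  | nil => intro t h; cases t <;> simp_all [treeList]
  | node v a b iha ihb =>
    intro t h
    cases t with
    | nil => simp [treeList] at h
    | node w c d =>
      simp only [treeList, List.cons.injEq, true_and] at h
      have h1 := congrArg (List.takeWhile (fun x => decide (0 < x))) h
      rw [takeWhile_node (isHeightList_treeList b), takeWhile_node (isHeightList_treeList d)] at h1
      rw [h1] at h
      rw [ihb (List.append_cancel_left h),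
        iha (List.map_injective_iff.2 (add_left_injective 1) h1)]

lemma exists_treeList_eq (m : ℕ) (l : List ℕ) (hm : l.length ≤ m) (hl : IsHeightList l) :
    ∃ t, treeList t = l := by
  induction m generalizing l with
  | zero => exact ⟨.nil, by simpa [treeList, eq_comm] using hm⟩
  | succ m ih =>
    cases l with
    | nil => exact ⟨.nil, rfl⟩
    | cons x l =>
      obtain ⟨hc, h0⟩ := hl
      obtain rfl : x = 0 := h0 x (by simp)
      set A := l.takeWhile (fun x => decide (0 < x)) with hA
      set B := l.dropWhile (fun x => decide (0 < x)) with hB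
      have hAB : A ++ B = l := List.takeWhile_append_dropWhile
      have hpos : ∀ x ∈ A, 0 < x := fun x hx => by simpa using List.mem_takeWhile_imp hx
      have hlen : A.length + B.length ≤ m := by
        rw [← List.length_append, hAB]; simpa using hm
      have hmap : (A.map (· - 1)).map (· + 1) = A := by
        rw [List.map_map]
        conv_rhs => rw [← List.map_id A]
        exact List.map_congr_left fun x hx => by have := hpos x hx; simp; omega
      rw [← hAB, List.isChain_cons, List.isChain_append] at hc
      obtain ⟨hhead, hcA, hcB, -⟩ := hc
      obtain ⟨a, ha⟩ := ih (A.map (· - 1)) (by simp; omega) <| by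
        refine ⟨?_, ?_⟩
        · rw [List.isChain_map]
          exact hcA.imp (by intro a b h; omega)
        · cases hA' : A with
          | nil => simp
          | cons y A' =>
            have := hhead y (by simp [hA'])
            simp
            omega
      obtain ⟨b, hb⟩ := ih B (by omega) <| by
        refine ⟨hcB, fun x hx => ?_⟩
        have := List.head?_dropWhile_not (fun x => decide (0 < x)) l
        rw [← hB, Option.mem_def.1 hx] at this
        simpa using this
      exact ⟨.node () a b, by rw [treeList, ha, hb, hmap, hAB]⟩

lemma bijOn_treeList (n : ℕ) :
    Set.BijOn treeList (BinaryTree.treesOfNumNodesEq n : Set (BinaryTree Unit))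
      {l | IsHeightList l ∧ l.length = n} := by
  refine ⟨fun t ht => ?_, treeList_injective.injOn, fun l hl => ?_⟩
  · rw [Finset.mem_coe, BinaryTree.mem_treesOfNumNodesEq] at ht
    exact ⟨isHeightList_treeList t, by rw [length_treeList, ht]⟩
  · obtain ⟨t, rfl⟩ := exists_treeList_eq _ l le_rfl hl.1
    refine ⟨t, ?_, rfl⟩
    rw [Finset.mem_coe, BinaryTree.mem_treesOfNumNodesEq, ← length_treeList, hl.2]

/-! ### Height lists and order ideals -/

lemma IsHeightList.getD_zero {l : List ℕ} (hl : IsHeightList l) : l.getD 0 0 = 0 := by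
  cases l with
  | nil => rfl
  | cons x l => exact hl.2 x (by simp)

lemma IsHeightList.getD_succ {l : List ℕ} (hl : IsHeightList l) (r : ℕ) :
    l.getD (r + 1) 0 ≤ l.getD r 0 + 1 := by
  by_cases h : r + 1 < l.length
  · rw [List.getD_eq_getElem _ _ h, List.getD_eq_getElem _ _ (by omega)]
    exact hl.1.getElem r h
  · rw [List.getD_eq_default _ _ (by omega)]
    omega

lemma IsHeightList.getD_le {l : List ℕ} (hl : IsHeightList l) (r : ℕ) : l.getD r 0 ≤ r := by
  induction r with
  | zero => exact hl.getD_zero.le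
  | succ r ih => have := hl.getD_succ r; omega

lemma mul_add_mem_idealOf {n : ℕ} {l : List ℕ} {q r : ℕ} (hr : r < n) :
    q * n + r ∈ idealOf n l ↔ q < l.getD r 0 := by
  have h1 : (q * n + r) / n = q := by
    rw [mul_comm, Nat.mul_add_div (by omega), Nat.div_eq_of_lt hr, add_zero]
  have h2 : (q * n + r) % n = r := by
    rw [mul_comm, Nat.mul_add_mod, Nat.mod_eq_of_lt hr]
  rw [idealOf, Set.mem_ofPred_eq, h1, h2]

/-- An element of the numerical semigroup `ℕn + ℕ(n + 1)` has remainder at most its quotient. -/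
lemma mod_le_div {n : ℕ} (hn : 0 < n) (a b : ℕ) :
    (a * n + b * (n + 1)) % n ≤ (a * n + b * (n + 1)) / n := by
  have h : a * n + b * (n + 1) = n * (a + b) + b := by ring
  rw [h, Nat.mul_add_mod, Nat.mul_add_div hn]
  have := Nat.mod_le b n
  have := Nat.zero_le (b / n)
  by_cases hb : b < n
  · omega
  · have := Nat.mod_lt b hn
    omega

lemma idealOf_add {n : ℕ} (hn : 0 < n) {l : List ℕ} {c : ℕ} (h : c + n ∈ idealOf n l) :
    c ∈ idealOf n l := by
  rw [idealOf, Set.mem_ofPred_eq, Nat.add_mod_right, Nat.add_div_right _ hn] at h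
  exact (Nat.lt_succ_self _).trans h

lemma idealOf_add_succ {n : ℕ} (hn : 0 < n) {l : List ℕ} (hl : IsHeightList l) {c : ℕ}
    (h : c + (n + 1) ∈ idealOf n l) : c ∈ idealOf n l := by
  have hc : c / n * n + c % n = c := by rw [mul_comm]; exact Nat.div_add_mod c n
  have hlt := Nat.mod_lt c hn
  rw [← hc, mul_add_mem_idealOf hlt]
  by_cases hr : c % n + 1 < n
  · rw [show c + (n + 1) = (c / n + 1) * n + (c % n + 1) by linarith, mul_add_mem_idealOf hr] at h
    have := hl.getD_succ (c % n)
    omega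
  · -- here `c + n + 1` is a multiple of `n`, and column `0` is empty
    rw [show c + (n + 1) = (c / n + 2) * n + 0 by
        have : c % n + 1 = n := by omega
        linarith, mul_add_mem_idealOf hn, hl.getD_zero] at h
    omega

lemma isOrderIdeal_idealOf {n : ℕ} (hn : 0 < n) {l : List ℕ} (hl : IsHeightList l) :
    IsOrderIdeal n (n + 1) (idealOf n l) := by
  refine ⟨?_, ?_⟩
  · rintro m hm ⟨a, b, rfl⟩
    have h1 := mod_le_div hn a b
    have h2 := hl.getD_le ((a * n + b * (n + 1)) % n)
    rw [idealOf, Set.mem_ofPred_eq] at hm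
    omega
  · rintro c d - hd ⟨a, b, rfl⟩
    induction b with
    | zero =>
      induction a with
      | zero => simpa using hd
      | succ a ih =>
        refine ih (idealOf_add hn ?_)
        convert! hd using 1
        ring
    | succ b ih =>
      refine ih (idealOf_add_succ hn hl ?_)
      convert! hd using 1
      ring

lemma idealOf_injOn (n : ℕ) :
    Set.InjOn (idealOf n) {l | IsHeightList l ∧ l.length = n} := by
  rintro l ⟨-, hl⟩ l' ⟨-, hl'⟩ h
  refine List.ext_getElem (hl.trans hl'.symm) fun r h1 h2 => ?_
  rw [← List.getD_eq_getElem l 0 h1, ← List.getD_eq_getElem l' 0 h2]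
  refine eq_of_forall_lt_iff fun q => ?_
  rw [← mul_add_mem_idealOf (n := n) (by omega), ← mul_add_mem_idealOf (n := n) (by omega), h]

lemma posetElems_of_le {s t c d : ℕ} (h : PosetLe s t c d) (hd : d ∈ PosetElems s t) :
    c ∈ PosetElems s t := by
  rintro ⟨a, b, rfl⟩
  obtain ⟨a', b', rfl⟩ := h
  exact hd ⟨a + a', b + b', by ring⟩

lemma IsOrderIdeal.mem_of_le {s t c d : ℕ} {I : Set ℕ} (hI : IsOrderIdeal s t I) (hd : d ∈ I)
    (h : PosetLe s t c d) : c ∈ I :=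
  hI.2 (posetElems_of_le h (hI.1 hd)) hd h

lemma idealOf_surjOn {n : ℕ} (hn : 0 < n) :
    Set.SurjOn (idealOf n) {l | IsHeightList l ∧ l.length = n}
      {I | IsOrderIdeal n (n + 1) I} := by
  classical
  intro I hI
  -- `r * n + r = r * (n + 1)` is in the semigroup, so every column is bounded
  have hdiag : ∀ r, r * n + r ∉ I := fun r hr => hI.1 hr ⟨0, r, by ring⟩
  have hex : ∀ r, ∃ q, q * n + r ∉ I := fun r => ⟨r, hdiag r⟩
  set h : ℕ → ℕ := fun r => Nat.find (hex r) with hh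
  have hlt : ∀ q r, q < h r ↔ q * n + r ∈ I := by
    intro q r
    refine ⟨fun hq => not_not.1 (Nat.find_min (hex r) hq), fun hq => ?_⟩
    by_contra hle
    obtain ⟨e, rfl⟩ := Nat.exists_eq_add_of_le (not_lt.1 hle)
    exact Nat.find_spec (hex r) (hI.mem_of_le hq ⟨e, 0, by simp only [hh]; ring⟩)
  have hsucc : ∀ r, h (r + 1) ≤ h r + 1 := by
    intro r
    by_contra hcon
    have h1 := (hlt (h r + 1) (r + 1)).1 (by omega)
    have h2 := (hlt (h r) r).2 (hI.mem_of_le h1 ⟨0, 1, by ring⟩)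
    omega
  have hzero : h 0 = 0 := by
    by_contra hcon
    exact hdiag 0 ((hlt 0 0).1 (by omega))
  refine ⟨(List.range n).map h, ⟨⟨?_, ?_⟩, by simp⟩, ?_⟩
  · rw [List.isChain_iff_getElem]
    intro i hi
    simpa using hsucc i
  · intro x hx
    obtain ⟨m, rfl⟩ := Nat.exists_eq_succ_of_ne_zero hn.ne'
    rw [List.range_succ_eq_map] at hx
    simp [hzero] at hx
    exact hx.symm
  · ext m
    have hm : m / n * n + m % n = m := by rw [mul_comm]; exact Nat.div_add_mod m n
    have hr := Nat.mod_lt m hn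
    rw [← hm, mul_add_mem_idealOf hr, ← hlt, List.getD_eq_getElem _ _ (by simpa using hr)]
    simp

lemma bijOn_idealOf {n : ℕ} (hn : 0 < n) :
    Set.BijOn (idealOf n) {l | IsHeightList l ∧ l.length = n} {I | IsOrderIdeal n (n + 1) I} :=
  ⟨fun _ hl => isOrderIdeal_idealOf hn hl.1, idealOf_injOn n, idealOf_surjOn hn⟩

/-! ### The count and the recurrence -/

lemma numIdeals_eq_catalan (k : ℕ) : numIdeals k = catalan (k + 1) := by
  rw [numIdeals, ← (bijOn_idealOf k.succ_pos).ncard_eq, ← (bijOn_treeList (k + 1)).ncard_eq,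
    Set.ncard_coe_finset, BinaryTree.treesOfNumNodesEq_card_eq_catalan]

/-- The convention `p (-1) = 1` agrees with `C_0 = 1`. -/
lemma pe_eq_catalan (j : ℕ) : pe ((j : ℤ) - 1) = catalan j := by
  cases j with
  | zero => simp [pe]
  | succ j => simp [pe, numIdeals_eq_catalan]

/-- The number of order ideals of `P_{k+1, k+2}` equals the Catalan number `C_{k+1}`,
and with `p(−1) = 1`, `p(0) = 1`, the recurrence
`p(k) = Σ_{i=1}^{k+1} p(i−2)·p(k−i)` holds for all `k ≥ 1`. -/
theorem catalan_count_and_recurrence :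
    (∀ k : ℕ, numIdeals k = catalan (k + 1)) ∧
    pe (-1) = 1 ∧ pe 0 = 1 ∧
    (∀ k : ℕ, 1 ≤ k →
      pe (k : ℤ) = ∑ i ∈ Finset.Icc (1 : ℤ) ((k : ℤ) + 1),
        pe (i - 2) * pe ((k : ℤ) - i)) := by
  refine ⟨numIdeals_eq_catalan, by simpa using pe_eq_catalan 0,
    by simpa using pe_eq_catalan 1, fun k _ => ?_⟩
  have hk : pe (k : ℤ) = catalan (k + 1) := by simpa using pe_eq_catalan (k + 1)
  rw [hk, catalan_succ', Finset.Nat.sum_antidiagonal_eq_sum_range_succ_mk]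
  refine Finset.sum_bij (fun j _ => (j : ℤ) + 1) ?_ ?_ ?_ ?_
  · intro j hj
    simp only [Finset.mem_range, Finset.mem_Icc] at *
    omega
  · intro a _ b _ h
    omega
  · intro i hi
    simp only [Finset.mem_range, Finset.mem_Icc] at *
    exact ⟨(i - 1).toNat, by omega, by omega⟩
  · intro j hj
    have hj' : j ≤ k := by simpa [Nat.lt_succ_iff] using hj
    rw [← pe_eq_catalan, ← pe_eq_catalan, Nat.cast_sub hj']
    congr 2 <;> ring
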